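/- Let n ≥ j ≥ 3 and let τ be a pattern of length j. Let Γ_j be the set of all j-element subsets of [n], let Σ_n be a uniformly random permutation of [n], for α ∈ Γ_j let X_α be the indicator that τ occurs in Σ_n at the positions of α (listed in increasing order), and let 𝕏 = (X_α)_{α∈Γ_j}. Let 𝔹 = (B_α)_{α∈Γ_j} be a family of independent Bernoulli random variables with E B_α = E X_α = 1/j! for all α. Then d_TV( L(𝕏), L(𝔹) ) ≤ 4·D_{n,j} + 2λ/j!, where λ = C(n,j)/j!, D_{n,j} = min(1, λ^{−1})·(d_1 + d_2), d_1 = C(n,j)·(C(n,j) − C(n−j,j))/(j!)², and d_2 = Σ_{s=1}^{j−1} C(n, 2j−s)·2·L_s(τ)/(2j−s)!. -/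

import Mathlib

open scoped Classical
open Filter

noncomputable section

/-- `τ` occurs in `σ` at the strictly increasing positions given by `f`:
`f` is strictly increasing and `σ ∘ f` is order-isomorphic to `τ`. -/
def OccursAt {m n : ℕ} (τ : Equiv.Perm (Fin m)) (σ : Equiv.Perm (Fin n))
    (f : Fin m → Fin n) : Prop :=
  StrictMono f ∧ ∀ k l, σ (f k) < σ (f l) ↔ τ k < τ l

/-- `τ` occurs in `σ` at the set of positions `α` (listed in increasing order). -/
def OccursOn {m n : ℕ} (τ : Equiv.Perm (Fin m)) (σ : Equiv.Perm (Fin n))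
    (α : Finset (Fin n)) : Prop :=
  ∃ f : Fin m → Fin n, StrictMono f ∧ Finset.univ.image f = α ∧
    ∀ k l, σ (f k) < σ (f l) ↔ τ k < τ l

/-- `τ` occurs in `σ` at the consecutive (0-indexed) positions `i, i+1, …, i+m-1`. -/
def OccursConsec {m n : ℕ} (τ : Equiv.Perm (Fin m)) (σ : Equiv.Perm (Fin n)) (i : ℕ) : Prop :=
  ∃ h : i + m ≤ n, ∀ k l : Fin m,
    σ ⟨i + k, by have := k.isLt; omega⟩ < σ ⟨i + l, by have := l.isLt; omega⟩ ↔ τ k < τ l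

/-- The overlap count `L_s(τ)`: the number of permutations of `[2m-s]` containing
two occurrences of `τ` at index sets sharing exactly `s` elements. -/
def overlapCount {m : ℕ} (τ : Equiv.Perm (Fin m)) (s : ℕ) : ℕ :=
  Set.ncard {ρ : Equiv.Perm (Fin (2 * m - s)) |
    ∃ α β : Finset (Fin (2 * m - s)), α.card = m ∧ β.card = m ∧ (α ∩ β).card = s ∧
      OccursOn τ ρ α ∧ OccursOn τ ρ β}

/-- The sequential overlap count `L̄_s(τ)`: the number of permutations of `[2m-s]` with
occurrences of `τ` at positions `(1,…,m)` and `(m-s+1,…,2m-s)`. -/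
def seqOverlapCount {m : ℕ} (τ : Equiv.Perm (Fin m)) (s : ℕ) : ℕ :=
  Set.ncard {ρ : Equiv.Perm (Fin (2 * m - s)) |
    OccursConsec τ ρ 0 ∧ OccursConsec τ ρ (m - s)}

/-- The number of inversions of a permutation. -/
def invCount {n : ℕ} (σ : Equiv.Perm (Fin n)) : ℕ :=
  (Finset.univ.filter fun p : Fin n × Fin n => p.1 < p.2 ∧ σ p.2 < σ p.1).card

/-- The inversion polynomial `I_n(q) = ∏_{j=1}^n (1 + q + ⋯ + q^{j-1})`. -/
def invPoly (n : ℕ) (q : ℝ) : ℝ :=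
  ∏ j ∈ Finset.range n, ∑ i ∈ Finset.range (j + 1), q ^ i

/-- Probability of the event `E` under the uniform distribution on `S_n`. -/
def unifProb {n : ℕ} (E : Set (Equiv.Perm (Fin n))) : ℝ :=
  (E.ncard : ℝ) / (n.factorial : ℝ)

/-- Probability of the event `E` under the Mallows(q) distribution on `S_n`. -/
def mallowsProb {n : ℕ} (q : ℝ) (E : Set (Equiv.Perm (Fin n))) : ℝ :=
  (∑ σ ∈ Finset.univ.filter (· ∈ E), q ^ invCount σ) / invPoly n q

/-- Expectation of `X` under the uniform distribution on `S_n`. -/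
def unifExp {n : ℕ} (X : Equiv.Perm (Fin n) → ℝ) : ℝ :=
  (∑ σ : Equiv.Perm (Fin n), X σ) / (n.factorial : ℝ)

/-- Expectation of `X` under the Mallows(q) distribution on `S_n`. -/
def mallowsExp {n : ℕ} (q : ℝ) (X : Equiv.Perm (Fin n) → ℝ) : ℝ :=
  (∑ σ : Equiv.Perm (Fin n), X σ * q ^ invCount σ) / invPoly n q

/-- The Poisson(lam) probability mass function. -/
def poissonPMF (lam : ℝ) (k : ℕ) : ℝ :=
  Real.exp (-lam) * lam ^ k / (k.factorial : ℝ)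

/-- Total variation distance between the law of the ℕ-valued statistic `W` of a uniformly
random permutation of `[n]` and the Poisson(lam) distribution. -/
def dTVNatUnif {n : ℕ} (W : Equiv.Perm (Fin n) → ℕ) (lam : ℝ) : ℝ :=
  (1 / 2) * ∑' k : ℕ, |unifProb {σ | W σ = k} - poissonPMF lam k|

/-- Total variation distance between the law of the ℕ-valued statistic `W` of a Mallows(q)
random permutation of `[n]` and the Poisson(lam) distribution. -/
def dTVNatMallows {n : ℕ} (q : ℝ) (W : Equiv.Perm (Fin n) → ℕ) (lam : ℝ) : ℝ :=
  (1 / 2) * ∑' k : ℕ, |mallowsProb q {σ | W σ = k} - poissonPMF lam k|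

/-- Total variation distance between the joint law of the indicator family
`(X_α)_{α ∈ I}` of a uniformly random permutation of `[n]` and the joint law of
independent Bernoulli random variables with marginals `p`. -/
def dTVFamUnif {n : ℕ} {I : Type*} [Fintype I] [DecidableEq I]
    (X : Equiv.Perm (Fin n) → I → Prop) (p : I → ℝ) : ℝ :=
  (1 / 2) * ∑ x : I → Bool,
    |unifProb {σ | ∀ α, X σ α ↔ x α = true} - ∏ α, (if x α then p α else 1 - p α)|

/-- Total variation distance between the joint law of the indicator family
`(X_α)_{α ∈ I}` of a Mallows(q) random permutation of `[n]` and the joint law of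
independent Bernoulli random variables with marginals `p`. -/
def dTVFamMallows {n : ℕ} (q : ℝ) {I : Type*} [Fintype I] [DecidableEq I]
    (X : Equiv.Perm (Fin n) → I → Prop) (p : I → ℝ) : ℝ :=
  (1 / 2) * ∑ x : I → Bool,
    |mallowsProb q {σ | ∀ α, X σ α ↔ x α = true} - ∏ α, (if x α then p α else 1 - p α)|


/-- rank of `x` with respect to `S` -/
def rk {γ : Type*} [LinearOrder γ] (S : Finset γ) (x : γ) : ℕ := (S.filter (· < x)).card

theorem rk_lt_card {γ : Type*} [LinearOrder γ] {S : Finset γ} {x : γ} (hx : x ∈ S) :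
    rk S x < S.card := by
  apply Finset.card_lt_card
  refine ⟨Finset.filter_subset _ _, fun h => ?_⟩
  have := h hx
  simp at this

theorem rk_lt_rk {γ : Type*} [LinearOrder γ] {S : Finset γ} {x y : γ} (hx : x ∈ S) (h : x < y) :
    rk S x < rk S y := by
  apply Finset.card_lt_card
  refine ⟨fun z hz => ?_, fun hh => ?_⟩
  · simp only [Finset.mem_filter] at hz ⊢
    exact ⟨hz.1, hz.2.trans h⟩
  · have : x ∈ S.filter (· < x) := hh (by simp [hx, h])
    simp at this

theorem rk_inj {γ : Type*} [LinearOrder γ] {S : Finset γ} {x y : γ} (hx : x ∈ S) (hy : y ∈ S)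
    (h : rk S x = rk S y) : x = y := by
  rcases lt_trichotomy x y with h1 | h1 | h1
  · have := rk_lt_rk hx h1; omega
  · exact h1
  · have := rk_lt_rk hy h1; omega

theorem rk_union {γ : Type*} [LinearOrder γ] {S T : Finset γ} (h : Disjoint S T) (x : γ) :
    rk (S ∪ T) x = rk S x + rk T x := by
  unfold rk
  rw [Finset.filter_union, Finset.card_union_of_disjoint]
  exact Finset.disjoint_filter_filter h

theorem rk_image {γ δ : Type*} [LinearOrder γ] [LinearOrder δ] {X : Finset γ} {g : γ → δ}
    (hg : ∀ x ∈ X, ∀ y ∈ X, x < y → g x < g y) {x : γ} (hx : x ∈ X) :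
    rk (X.image g) (g x) = rk X x := by
  have hlt : ∀ y ∈ X, (g y < g x ↔ y < x) := by
    intro y hy
    constructor
    · intro h
      by_contra hc
      rcases lt_or_eq_of_le (not_lt.mp hc) with h1 | h1
      · exact absurd (hg x hx y hy h1) (not_lt.mpr h.le)
      · subst h1; exact lt_irrefl _ h
    · exact hg y hy x hx
  unfold rk
  rw [Finset.filter_image, Finset.card_image_of_injOn]
  · congr 1
    apply Finset.filter_congr
    intro y hy
    exact hlt y hy
  · intro a ha b hb hab
    have ha' : a ∈ X := by simp at ha; exact ha.1
    have hb' : b ∈ X := by simp at hb; exact hb.1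
    rcases lt_trichotomy a b with h1 | h1 | h1
    · have := hg a ha' b hb' h1; rw [hab] at this; exact absurd this (lt_irrefl _)
    · exact h1
    · have := hg b hb' a ha' h1; rw [hab] at this; exact absurd this (lt_irrefl _)

/-- recovery of the exclusive set from the union and two rank sets -/
theorem recover {γ : Type*} [LinearOrder γ] {α β α' β' : Finset γ}
    (hU : α ∪ β = α' ∪ β')
    (hB : (β \ α).image (rk β) = (β' \ α').image (rk β'))
    (hW : (β \ α).image (rk ((α \ β) ∪ (β \ α))) =
      (β' \ α').image (rk ((α' \ β') ∪ (β' \ α')))) :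
    ∀ x ∈ β \ α, x ∈ β' \ α' ∧ rk β x = rk β' x := by
  intro x hx
  have key : ∀ (a b : Finset γ) (z : γ), rk (a ∪ b) z + rk (b \ a) z
      = rk b z + rk ((a \ b) ∪ (b \ a)) z := by
    intro a b z
    have h1 : a ∪ b = b ∪ (a \ b) := by ext; simp; tauto
    rw [h1, rk_union Finset.disjoint_sdiff, rk_union disjoint_sdiff_sdiff]
    omega
  have mono1 : ∀ (a b : Finset γ), ∀ u ∈ b \ a, ∀ v ∈ b \ a, u < v → rk b u < rk b v := by
    intro a b u hu v _ h
    exact rk_lt_rk (Finset.mem_sdiff.mp hu).1 h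
  have mono2 : ∀ (a b : Finset γ), ∀ u ∈ b \ a, ∀ v ∈ b \ a, u < v →
      rk ((a \ b) ∪ (b \ a)) u < rk ((a \ b) ∪ (b \ a)) v := by
    intro a b u hu v _ h
    exact rk_lt_rk (Finset.mem_union_right _ hu) h
  obtain ⟨y, hy, hyx⟩ : ∃ y ∈ β' \ α', rk β' y = rk β x := by
    have : rk β x ∈ (β' \ α').image (rk β') := by
      rw [← hB]; exact Finset.mem_image_of_mem _ hx
    simpa using Finset.mem_image.mp this
  obtain ⟨z, hz, hzx⟩ : ∃ z ∈ β' \ α', rk ((α' \ β') ∪ (β' \ α')) z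
      = rk ((α \ β) ∪ (β \ α)) x := by
    have : rk ((α \ β) ∪ (β \ α)) x ∈ (β' \ α').image (rk ((α' \ β') ∪ (β' \ α'))) := by
      rw [← hW]; exact Finset.mem_image_of_mem _ hx
    exact Finset.mem_image.mp this
  have e1 : rk (β' \ α') y = rk (β \ α) x := by
    rw [← rk_image (mono1 α' β') hy, ← rk_image (mono1 α β) hx, hB, hyx]
  have e2 : rk (β' \ α') z = rk (β \ α) x := by
    rw [← rk_image (mono2 α' β') hz, ← rk_image (mono2 α β) hx, hW, hzx]
  have hzy : z = y := rk_inj hz hy (e2.trans e1.symm)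
  subst hzy
  have k1 := key α β x
  have k2 := key α' β' z
  have e3 : rk (α ∪ β) x = rk (α ∪ β) z := by
    rw [hU] at k1 ⊢; omega
  have hxz : x = z := by
    apply rk_inj _ _ e3
    · exact Finset.mem_union_right _ (Finset.mem_sdiff.mp hx).1
    · rw [hU]; exact Finset.mem_union_right _ (Finset.mem_sdiff.mp hz).1
  subst hxz
  exact ⟨hz, hyx.symm⟩

theorem occ_card {m n : ℕ} {τ : Equiv.Perm (Fin m)} {σ : Equiv.Perm (Fin n)}
    {α : Finset (Fin n)} (h : OccursOn τ σ α) : α.card = m := by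
  obtain ⟨f, hf, rfl, _⟩ := h
  rw [Finset.card_image_of_injective _ hf.injective]; simp

theorem rk_univ_fin {m : ℕ} (k : Fin m) : rk Finset.univ k = (k : ℕ) := by
  unfold rk
  have : (Finset.univ.filter (· < k)) = Finset.Iio k := by ext; simp
  rw [this]; simp

theorem occ_rank {m n : ℕ} {τ : Equiv.Perm (Fin m)} {σ : Equiv.Perm (Fin n)}
    {α : Finset (Fin n)} (h : OccursOn τ σ α) {x : Fin n} (hx : x ∈ α) :
    ∃ k : Fin m, rk α x = k ∧ rk (α.image σ) (σ x) = τ k := by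
  obtain ⟨f, hf, rfl, h2⟩ := h
  obtain ⟨k, _, rfl⟩ := Finset.mem_image.mp hx
  refine ⟨k, ?_, ?_⟩
  · rw [rk_image (fun a _ b _ hab => hf hab) (Finset.mem_univ k), rk_univ_fin]
  · rw [← rk_univ_fin (τ k)]
    unfold rk
    rw [Finset.image_image, Finset.filter_image, Finset.card_image_of_injective _
      (σ.injective.comp hf.injective)]
    have : (Finset.univ.filter (· < τ k)) =
      (Finset.univ.filter (fun l => τ l < τ k)).image τ := by
      ext y
      simp only [Finset.mem_filter, Finset.mem_univ, true_and, Finset.mem_image]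
      constructor
      · intro hy; exact ⟨τ.symm y, by simpa using hy, by simp⟩
      · rintro ⟨l, hl, rfl⟩; exact hl
    rw [this, Finset.card_image_of_injective _ τ.injective]
    congr 1
    ext l
    simp [h2]

/-- Encoding of a pair of occurrences. -/
theorem encode_inj {m n : ℕ} {τ : Equiv.Perm (Fin m)} {σ σ' : Equiv.Perm (Fin n)}
    {α β α' β' : Finset (Fin n)}
    (ha : OccursOn τ σ α) (hb : OccursOn τ σ β) (ha' : OccursOn τ σ' α') (hb' : OccursOn τ σ' β')
    (hU : α ∪ β = α' ∪ β')
    (hB : (β \ α).image (rk β) = (β' \ α').image (rk β'))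
    (hW : (β \ α).image (rk ((α \ β) ∪ (β \ α))) =
      (β' \ α').image (rk ((α' \ β') ∪ (β' \ α'))))
    (hV : ((β \ α).image σ).image (rk (((α \ β) ∪ (β \ α)).image σ)) =
      ((β' \ α').image σ').image (rk (((α' \ β') ∪ (β' \ α')).image σ')))
    (hR : ∀ x, x ∉ α ∪ β → σ x = σ' x) : σ = σ' ∧ α = α' := by
  have r1 := recover hU hB hW
  have r2 := recover hU.symm hB.symm hW.symm
  have hX : β \ α = β' \ α' := by
    ext x; exact ⟨fun h => (r1 x h).1, fun h => (r2 x h).1⟩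
  have hα : α = α' := by
    have e : ∀ a b : Finset (Fin n), a = (a ∪ b) \ (b \ a) := by intro a b; ext; simp; tauto
    rw [e α β, e α' β', hU, hX]
  refine ⟨?_, hα⟩
  have hUV : (α ∪ β).image σ = (α ∪ β).image σ' := by
    have hc : (α ∪ β)ᶜ.image σ = (α ∪ β)ᶜ.image σ' := by
      apply Finset.image_congr
      intro x hx
      exact hR x (by simpa using hx)
    have e : ∀ s : Equiv.Perm (Fin n), (α ∪ β).image s = ((α ∪ β)ᶜ.image s)ᶜ := by
      intro s
      ext y
      simp only [Finset.mem_image, Finset.mem_compl]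
      constructor
      · rintro ⟨x, hx, rfl⟩ ⟨z, hz, hzx⟩
        exact hz (s.injective hzx ▸ hx)
      · intro h
        by_contra hc
        exact h ⟨s.symm y, fun h' => hc ⟨_, h', by simp⟩, by simp⟩
    rw [e σ, e σ', hc]
  have hBv : (β.image σ \ α.image σ).image (rk (β.image σ)) =
      (β'.image σ' \ α'.image σ').image (rk (β'.image σ')) := by
    have e : ∀ (s : Equiv.Perm (Fin n)) (a b : Finset (Fin n)), OccursOn τ s b →
        (b.image s \ a.image s).image (rk (b.image s)) =
        ((b \ a).image (rk b)).image (fun k => if h : k < m then ((τ ⟨k, h⟩ : Fin m) : ℕ) else 0) := by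
      intro s a b hh
      rw [← Finset.image_sdiff _ _ s.injective, Finset.image_image, Finset.image_image]
      apply Finset.image_congr
      intro x hx
      have hxb : x ∈ b := by simp at hx; exact hx.1
      obtain ⟨k, hk1, hk2⟩ := occ_rank hh hxb
      simp [hk1, hk2]
    rw [e σ α β hb, e σ' α' β' hb', hB]
  have r3 := recover (α := α.image σ) (β := β.image σ) (α' := α'.image σ') (β' := β'.image σ')
    (by rw [← Finset.image_union, ← Finset.image_union, hUV, hU]) hBv
    (by
      rw [← Finset.image_sdiff _ _ σ.injective, ← Finset.image_sdiff _ _ σ.injective,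
        ← Finset.image_sdiff _ _ σ'.injective, ← Finset.image_sdiff _ _ σ'.injective,
        ← Finset.image_union, ← Finset.image_union]
      exact hV)
  have hsub : (β \ α).image σ ⊆ (β' \ α').image σ' := by
    intro y hy
    have := (r3 y (by rw [← Finset.image_sdiff _ _ σ.injective]; exact hy)).1
    rwa [← Finset.image_sdiff _ _ σ'.injective] at this
  have hXv : (β \ α).image σ = (β \ α).image σ' := by
    rw [← hX] at hsub
    apply Finset.eq_of_subset_of_card_le hsub
    rw [Finset.card_image_of_injective _ σ.injective, Finset.card_image_of_injective _ σ'.injective]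
  have hαv : α.image σ = α.image σ' := by
    have e : ∀ s : Equiv.Perm (Fin n), α.image s = (α ∪ β).image s \ (β \ α).image s := by
      intro s
      rw [← Finset.image_sdiff _ _ s.injective]
      congr 1
      ext; simp; tauto
    rw [e σ, e σ', hUV, hXv]
  ext1 x
  by_cases hx : x ∈ α
  · obtain ⟨k, hk1, hk2⟩ := occ_rank ha hx
    obtain ⟨k', hk1', hk2'⟩ := occ_rank ha' (hα ▸ hx)
    rw [← hα] at hk1' hk2'
    have : k = k' := by apply Fin.ext; omega
    subst this
    rw [← hαv] at hk2'
    refine rk_inj (S := α.image σ) (Finset.mem_image_of_mem _ hx) ?_ (hk2.trans hk2'.symm)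
    rw [hαv]; exact Finset.mem_image_of_mem _ hx
  · by_cases hxb : x ∈ β
    · have hx' : x ∈ β \ α := by simp [hx, hxb]
      have hcmp : ∀ y ∈ β \ α, (σ y < σ x ↔ σ' y < σ' x) := by
        have e : ∀ (s : Equiv.Perm (Fin n)) (b : Finset (Fin n)), ∀ y ∈ b, ∀ z ∈ b,
            (s y < s z ↔ rk (b.image s) (s y) < rk (b.image s) (s z)) := by
          intro s b y hy z hz
          constructor
          · intro h; exact rk_lt_rk (Finset.mem_image_of_mem _ hy) h
          · intro h
            by_contra hc
            rcases lt_or_eq_of_le (not_lt.mp hc) with h1 | h1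
            · have := rk_lt_rk (S := b.image s) (Finset.mem_image_of_mem _ hz) h1; omega
            · rw [h1] at h; omega
        have e2 : ∀ z ∈ β \ α, rk (β.image σ) (σ z) = rk (β'.image σ') (σ' z) := by
          intro z hz
          obtain ⟨k, hk1, hk2⟩ := occ_rank hb (Finset.mem_sdiff.mp hz).1
          obtain ⟨k', hk1', hk2'⟩ := occ_rank hb' (Finset.mem_sdiff.mp (r1 z hz).1).1
          have := (r1 z hz).2
          have : k = k' := by apply Fin.ext; omega
          subst this
          rw [hk2, hk2']
        intro y hy
        rw [e σ β y (Finset.mem_sdiff.mp hy).1 x hxb, e σ' β' y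
          (Finset.mem_sdiff.mp (r1 y hy).1).1 x (Finset.mem_sdiff.mp (r1 x hx').1).1,
          e2 y hy, e2 x hx']
      refine rk_inj (S := (β \ α).image σ) (Finset.mem_image_of_mem _ hx') ?_ ?_
      · rw [hXv]; exact Finset.mem_image_of_mem _ hx'
      · have e4 : rk ((β \ α).image σ) (σ' x) = rk ((β \ α).image σ') (σ' x) := by rw [hXv]
        rw [e4]
        unfold rk
        rw [Finset.filter_image, Finset.filter_image,
          Finset.card_image_of_injective _ σ.injective, Finset.card_image_of_injective _ σ'.injective]
        congr 1
        apply Finset.filter_congr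
        exact hcmp
    · exact hR x (by simp [hx, hxb])

/-- count of pairs with given union -/
theorem count_union {m n i : ℕ} (τ : Equiv.Perm (Fin m)) (U : Finset (Fin n))
    (hU : U.card = m + i) :
    (Finset.univ.filter (fun q : Equiv.Perm (Fin n) × Finset (Fin n) =>
      OccursOn τ q.1 q.2 ∧ ∃ β, OccursOn τ q.1 β ∧ q.2 ∪ β = U)).card ≤
    m.choose i * ((2 * i).choose i) ^ 2 * n.descFactorial (n - (m + i)) := by
  set S := (Finset.univ.filter (fun q : Equiv.Perm (Fin n) × Finset (Fin n) =>
      OccursOn τ q.1 q.2 ∧ ∃ β, OccursOn τ q.1 β ∧ q.2 ∪ β = U)) with hS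
  have hex : ∀ q : Equiv.Perm (Fin n) × Finset (Fin n), ∃ β, q ∈ S →
      OccursOn τ q.1 β ∧ q.2 ∪ β = U := by
    intro q
    by_cases h : q ∈ S
    · have h' := h
      simp only [hS, Finset.mem_filter] at h'
      obtain ⟨b, hb⟩ := h'.2.2
      exact ⟨b, fun _ => hb⟩
    · exact ⟨∅, fun h' => absurd h' h⟩
  choose b hb using hex
  have hocc : ∀ q ∈ S, OccursOn τ q.1 q.2 := by
    intro q hq
    simp only [hS, Finset.mem_filter] at hq
    exact hq.2.1
  let T : Finset (Finset ℕ × (Finset ℕ × Finset ℕ) × ({x : Fin n // x ∉ U} ↪ Fin n)) :=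
    Finset.powersetCard i (Finset.range m) ×ˢ
      ((Finset.powersetCard i (Finset.range (2 * i)) ×ˢ
        Finset.powersetCard i (Finset.range (2 * i))) ×ˢ Finset.univ)
  have hT : T.card = m.choose i * ((2 * i).choose i) ^ 2 * n.descFactorial (n - (m + i)) := by
    simp only [T, Finset.card_product, Finset.card_powersetCard, Finset.card_range,
      Finset.card_univ, Fintype.card_embedding_eq, Fintype.card_fin]
    have : Fintype.card {x : Fin n // x ∉ U} = n - (m + i) := by
      rw [Fintype.card_subtype_compl]
      simp [hU]
    rw [this]; ring
  rw [← hT]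
  let F : Equiv.Perm (Fin n) × Finset (Fin n) →
      Finset ℕ × (Finset ℕ × Finset ℕ) × ({x : Fin n // x ∉ U} ↪ Fin n) := fun q =>
    ((b q \ q.2).image (rk (b q)),
      ((b q \ q.2).image (rk ((q.2 \ b q) ∪ (b q \ q.2))),
       ((b q \ q.2).image q.1).image (rk (((q.2 \ b q) ∪ (b q \ q.2)).image q.1))),
      ⟨fun x => q.1 x.1, fun x y h => Subtype.ext (q.1.injective h)⟩)
  apply Finset.card_le_card_of_injOn F
  · intro q hq
    have hq : q ∈ S := hq
    have h1 := occ_card (hocc q hq)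
    have h2 := occ_card (hb q hq).1
    have hcX : (b q \ q.2).card = i := by
      have : (q.2 ∪ b q).card = (b q \ q.2).card + q.2.card := by
        rw [Finset.card_sdiff_add_card, Finset.union_comm]
      rw [(hb q hq).2, hU, h1] at this
      omega
    have hcA : (q.2 \ b q).card = i := by
      have : (q.2 ∪ b q).card = (q.2 \ b q).card + (b q).card := by
        rw [Finset.card_sdiff_add_card]
      rw [(hb q hq).2, hU, h2] at this
      omega
    have hcW : ((q.2 \ b q) ∪ (b q \ q.2)).card = 2 * i := by
      rw [Finset.card_union_of_disjoint disjoint_sdiff_sdiff]; omega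
    have gen : ∀ (γ : Finset (Fin n)) (V : Finset (Fin n)) (N : ℕ), γ ⊆ V → V.card = N →
        γ.card = i → γ.image (rk V) ∈ Finset.powersetCard i (Finset.range N) := by
      intro γ V N hsub hV hγ
      rw [Finset.mem_powersetCard]
      constructor
      · intro y hy
        obtain ⟨x, hx, rfl⟩ := Finset.mem_image.mp hy
        rw [Finset.mem_range, ← hV]
        exact rk_lt_card (hsub hx)
      · rw [Finset.card_image_of_injOn, hγ]
        intro x hx y hy hxy
        exact rk_inj (hsub hx) (hsub hy) hxy
    simp only [F, T, Finset.coe_product, Set.mem_prod, Finset.mem_coe, Finset.mem_univ, and_true]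
    refine ⟨gen _ _ _ Finset.sdiff_subset h2 hcX, gen _ _ _ Finset.subset_union_right hcW hcX,
      gen _ _ _ (Finset.image_subset_image Finset.subset_union_right) ?_ ?_⟩
    · rw [Finset.card_image_of_injective _ q.1.injective, hcW]
    · rw [Finset.card_image_of_injective _ q.1.injective, hcX]
  · intro q hq q' hq' h
    have hq : q ∈ S := hq
    have hq' : q' ∈ S := hq'
    simp only [F, Prod.mk.injEq] at h
    obtain ⟨hB, ⟨hW, hV⟩, hR⟩ := h
    have := encode_inj (hocc q hq) (hb q hq).1 (hocc q' hq') (hb q' hq').1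
      ((hb q hq).2.trans (hb q' hq').2.symm) hB hW hV (by
        intro x hx
        rw [(hb q hq).2] at hx
        have := DFunLike.congr_fun hR ⟨x, hx⟩
        exact this)
    exact Prod.ext this.1 this.2

/-- count of occurrences having another occurrence -/
theorem count_pairs {m n : ℕ} (τ : Equiv.Perm (Fin m)) :
    (Finset.univ.filter (fun q : Equiv.Perm (Fin n) × Finset (Fin n) =>
      OccursOn τ q.1 q.2 ∧ ∃ β, β ≠ q.2 ∧ OccursOn τ q.1 β)).card ≤
    ∑ i ∈ Finset.Icc 1 (n - m), n.choose (m + i) *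
      (m.choose i * ((2 * i).choose i) ^ 2 * n.descFactorial (n - (m + i))) := by
  have hsub : (Finset.univ.filter (fun q : Equiv.Perm (Fin n) × Finset (Fin n) =>
      OccursOn τ q.1 q.2 ∧ ∃ β, β ≠ q.2 ∧ OccursOn τ q.1 β)) ⊆
      (Finset.Icc 1 (n - m)).biUnion (fun i =>
        (Finset.powersetCard (m + i) Finset.univ).biUnion (fun U =>
          (Finset.univ.filter (fun q : Equiv.Perm (Fin n) × Finset (Fin n) =>
      OccursOn τ q.1 q.2 ∧ ∃ β, OccursOn τ q.1 β ∧ q.2 ∪ β = U)))) := by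
    intro q hq
    simp only [Finset.mem_filter, Finset.mem_univ, true_and] at hq
    obtain ⟨h1, β, hne, h2⟩ := hq
    have c1 := occ_card h1
    have c2 := occ_card h2
    have hlt : m < (q.2 ∪ β).card := by
      rw [← c1]
      apply Finset.card_lt_card
      refine ⟨Finset.subset_union_left, fun h => hne ?_⟩
      have hs : β ⊆ q.2 := Finset.subset_union_right.trans h
      exact Finset.eq_of_subset_of_card_le hs (by omega)
    have hle : (q.2 ∪ β).card ≤ n := by simpa using Finset.card_le_univ (q.2 ∪ β)
    simp only [Finset.mem_biUnion, Finset.mem_Icc, Finset.mem_powersetCard, Finset.subset_univ,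
      true_and, Finset.mem_filter, Finset.mem_univ]
    exact ⟨(q.2 ∪ β).card - m, by omega, q.2 ∪ β, by omega, h1, β, h2, rfl⟩
  refine (Finset.card_le_card hsub).trans (Finset.card_biUnion_le.trans ?_)
  apply Finset.sum_le_sum
  intro i _
  refine Finset.card_biUnion_le.trans ?_
  refine (Finset.sum_le_card_nsmul _ _ (m.choose i * ((2 * i).choose i) ^ 2 *
    n.descFactorial (n - (m + i))) ?_).trans ?_
  · intro U hU
    exact count_union τ U (Finset.mem_powersetCard.mp hU).2
  · simp

/-- insert value `v` at position `p` -/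
def insPerm {j : ℕ} (τ : Equiv.Perm (Fin j)) (p v : Fin (j + 1)) : Equiv.Perm (Fin (j + 1)) :=
  (finSuccEquiv' p).trans ((Equiv.optionCongr τ).trans (finSuccEquiv' v).symm)

theorem insPerm_self {j : ℕ} (τ : Equiv.Perm (Fin j)) (p v : Fin (j + 1)) :
    insPerm τ p v p = v := by
  simp [insPerm]

theorem insPerm_succAbove {j : ℕ} (τ : Equiv.Perm (Fin j)) (p v : Fin (j + 1)) (k : Fin j) :
    insPerm τ p v (p.succAbove k) = v.succAbove (τ k) := by
  simp [insPerm]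

theorem insPerm_lt {j : ℕ} (τ : Equiv.Perm (Fin j)) (p v : Fin (j + 1)) (t : ℕ) (ht : t < p)
    (h1 : t < j + 1) (h2 : t < j) :
    ((insPerm τ p v ⟨t, h1⟩ : Fin (j + 1)) : ℕ)
      = if ((τ ⟨t, h2⟩ : Fin j) : ℕ) < v then ((τ ⟨t, h2⟩ : Fin j) : ℕ) else (τ ⟨t, h2⟩ : Fin j) + 1 := by
  have : (⟨t, h1⟩ : Fin (j + 1)) = p.succAbove ⟨t, h2⟩ := by
    simp [Fin.succAbove, Fin.lt_def, ht]
  rw [this, insPerm_succAbove]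
  simp only [Fin.succAbove, Fin.lt_def, Fin.val_castSucc]
  split_ifs <;> simp

theorem insPerm_gt {j : ℕ} (τ : Equiv.Perm (Fin j)) (p v : Fin (j + 1)) (t : ℕ) (ht : (p : ℕ) < t)
    (h1 : t < j + 1) (h2 : t - 1 < j) :
    ((insPerm τ p v ⟨t, h1⟩ : Fin (j + 1)) : ℕ)
      = if ((τ ⟨t - 1, h2⟩ : Fin j) : ℕ) < v then ((τ ⟨t - 1, h2⟩ : Fin j) : ℕ)
        else (τ ⟨t - 1, h2⟩ : Fin j) + 1 := by
  have : (⟨t, h1⟩ : Fin (j + 1)) = p.succAbove ⟨t - 1, h2⟩ := by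
    have : ¬ (t - 1 < (p : ℕ)) := by omega
    simp only [Fin.succAbove, Fin.lt_def, Fin.val_castSucc, this, if_false]
    apply Fin.ext
    simp
    omega
  rw [this, insPerm_succAbove]
  simp only [Fin.succAbove, Fin.lt_def, Fin.val_castSucc]
  split_ifs <;> simp

/-- inflation of point `i`, increasing if `s = true` -/
def inflate {j : ℕ} (τ : Equiv.Perm (Fin j)) (i : Fin j) (s : Bool) : Equiv.Perm (Fin (j + 1)) :=
  insPerm τ i.succ (if s then (τ i).succ else (τ i).castSucc)

theorem inflate_aux (a b c : ℕ) (P Q : Prop) [Decidable P] [Decidable Q] (s : Bool) (h1 : P → a = c) (h2 : ¬ P → a ≠ c)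
    (h3 : Q → b = c) (h4 : ¬ Q → b ≠ c) :
    (if P then (if s then c + 1 else c) else
      (if a < (if s then c + 1 else c) then a else a + 1)) <
    (if Q then (if s then c + 1 else c) else
      (if b < (if s then c + 1 else c) then b else b + 1)) ↔ a < b := by
  by_cases hP : P <;> by_cases hQ : Q <;> cases s <;>
    simp only [hP, hQ, if_true, if_false, Bool.false_eq_true, true_implies, not_true,
      not_false_iff, false_implies] at * <;> (try split_ifs) <;> omega

theorem inflate_mem {j : ℕ} (τ : Equiv.Perm (Fin j)) (i : Fin j) (s : Bool) :
    ∃ α β : Finset (Fin (j + 1)), α.card = j ∧ β.card = j ∧ (α ∩ β).card = j - 1 ∧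
      OccursOn τ (inflate τ i s) α ∧ OccursOn τ (inflate τ i s) β := by
  have hne : i.succ ≠ i.castSucc := by
    intro h; have := congrArg Fin.val h; simp at this
  refine ⟨{i.succ}ᶜ, {i.castSucc}ᶜ, by simp [Finset.card_compl], by simp [Finset.card_compl], ?_, ?_, ?_⟩
  · rw [← Finset.compl_union, Finset.card_compl, Finset.card_union_of_disjoint (by simpa using hne)]
    simp
  · refine ⟨i.succ.succAbove, Fin.strictMono_succAbove _, Fin.image_succAbove_univ _, ?_⟩
    intro k l
    rw [inflate, insPerm_succAbove, insPerm_succAbove]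
    exact (Fin.strictMono_succAbove _).lt_iff_lt
  · refine ⟨i.castSucc.succAbove, Fin.strictMono_succAbove _, Fin.image_succAbove_univ _, ?_⟩
    have h1 : i.castSucc.succAbove i = i.succ := by simp
    have h2 : ∀ k, k ≠ i → i.castSucc.succAbove k = i.succ.succAbove k := by
      intro k hk
      have hk' : (k : ℕ) ≠ i := fun h => hk (Fin.ext h)
      simp only [Fin.succAbove, Fin.lt_def, Fin.val_castSucc, Fin.val_succ]
      split_ifs <;> first | rfl | omega
    have e : ∀ k, ((inflate τ i s (i.castSucc.succAbove k) : Fin (j + 1)) : ℕ) =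
        if k = i then (if s then (τ i : ℕ) + 1 else τ i) else
          (if ((τ k : Fin j) : ℕ) < (if s then (τ i : ℕ) + 1 else τ i) then (τ k : ℕ) else τ k + 1) := by
      intro k
      by_cases hk : k = i
      · subst hk
        rw [h1, inflate, insPerm_self]
        cases s <;> simp
      · rw [h2 k hk, inflate, insPerm_succAbove, if_neg hk]
        cases s <;> simp only [Fin.succAbove, Fin.lt_def, Fin.val_castSucc, Fin.val_succ] <;>
          (simp only [if_true, if_false, Bool.false_eq_true, Fin.val_castSucc, Fin.val_succ]; split_ifs <;> simp)
    have ti : ∀ k, k ≠ i → (τ k : ℕ) ≠ τ i := by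
      intro k hk h; exact hk (τ.injective (Fin.ext h))
    intro k l
    rw [Fin.lt_def, Fin.lt_def, e k, e l]
    have sk : k = i → (τ k : ℕ) = τ i := fun h => by rw [h]
    have sl : l = i → (τ l : ℕ) = τ i := fun h => by rw [h]
    exact inflate_aux _ _ _ _ _ s sk (ti k) sl (ti l)

theorem inflate_eq {j : ℕ} (τ : Equiv.Perm (Fin j)) (i i' : Fin j) (s s' : Bool)
    (h : inflate τ i s = inflate τ i' s') (hii : i < i') (hp : (i' : ℕ) - 1 < j) :
    s = s' ∧ (s = true → ((τ i' : Fin j) : ℕ) = (τ ⟨i' - 1, hp⟩ : Fin j) + 1) ∧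
      (s = false → ((τ ⟨i' - 1, hp⟩ : Fin j) : ℕ) = (τ i' : Fin j) + 1) := by
  have hlt : (i : ℕ) < i' := hii
  have hT : ∀ a b : Fin j, a ≠ b → (τ a : ℕ) ≠ τ b := by
    intro a b hab h; exact hab (τ.injective (Fin.ext h))
  have t1 : (τ i : ℕ) ≠ τ i' := hT _ _ (ne_of_lt hii)
  have t2 : (τ ⟨i' - 1, hp⟩ : ℕ) ≠ τ i' := hT _ _ (by
    intro h; have := congrArg Fin.val h; simp at this; omega)
  -- at position i
  have a1 := insPerm_lt τ i.succ (if s then (τ i).succ else (τ i).castSucc) i (by simp)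
    (by omega) (by omega)
  have b1 := insPerm_lt τ i'.succ (if s' then (τ i').succ else (τ i').castSucc) i (by simp; omega)
    (by omega) (by omega)
  have b2 := insPerm_lt τ i'.succ (if s' then (τ i').succ else (τ i').castSucc) i' (by simp)
    (by omega) (by omega)
  change insPerm τ i.succ _ = insPerm τ i'.succ _ at h
  rw [h, b1] at a1
  by_cases hc : (i' : ℕ) = i + 1
  · have a2 : ((insPerm τ i.succ (if s then (τ i).succ else (τ i).castSucc)
        ⟨i', by omega⟩ : Fin (j + 1)) : ℕ) = ((if s then (τ i).succ else (τ i).castSucc) : Fin (j+1)) := by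
      have : (⟨i', by omega⟩ : Fin (j + 1)) = i.succ := by apply Fin.ext; simp [hc]
      rw [this, insPerm_self]
    have e : (⟨i' - 1, hp⟩ : Fin j) = i := by apply Fin.ext; simp; omega
    rw [h, b2] at a2
    rw [e]
    clear b1 b2 h
    cases s <;> cases s' <;> simp at a1 a2 ⊢ <;> omega
  · have a2 := insPerm_gt τ i.succ (if s then (τ i).succ else (τ i).castSucc) i'
      (by simp; omega) (by omega) hp
    rw [h, b2] at a2
    have t3 : (τ ⟨i' - 1, hp⟩ : ℕ) ≠ τ i := hT _ _ (by
      intro h; have := congrArg Fin.val h; simp at this; omega)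
    cases s <;> cases s' <;> simp at a1 a2 ⊢ <;> split_ifs at a1 a2 <;> omega

theorem inflate_sign {j : ℕ} (τ : Equiv.Perm (Fin j)) (i : Fin j) (s s' : Bool)
    (h : inflate τ i s = inflate τ i s') : s = s' := by
  have := DFunLike.congr_fun h i.succ
  rw [inflate, inflate, insPerm_self, insPerm_self] at this
  have := congrArg Fin.val this
  cases s <;> cases s' <;> simp at this ⊢

theorem overlap_lower {j : ℕ} (hj : 1 ≤ j) (τ : Equiv.Perm (Fin j)) :
    j + 1 ≤ overlapCount τ (j - 1) := by
  have gen : ∀ N, N = j + 1 → j + 1 ≤ Set.ncard {ρ : Equiv.Perm (Fin N) |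
    ∃ α β : Finset (Fin N), α.card = j ∧ β.card = j ∧ (α ∩ β).card = j - 1 ∧
      OccursOn τ ρ α ∧ OccursOn τ ρ β} := by
    rintro N rfl
    let sg : Fin j → Bool := fun c => decide (¬ (1 ≤ (c : ℕ) ∧
      ((τ c : Fin j) : ℕ) = (τ ⟨c - 1, by omega⟩ : Fin j) + 1))
    let F : Option (Fin j) → Equiv.Perm (Fin (j + 1)) := fun o =>
      match o with
      | none => inflate τ ⟨0, hj⟩ false
      | some c => inflate τ c (sg c)
    have hlt : ∀ c c' : Fin j, c < c' → inflate τ c (sg c) ≠ inflate τ c' (sg c') := by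
      intro c c' hcc h
      have hcc' : (c : ℕ) < c' := hcc
      obtain ⟨e1, e2, e3⟩ := inflate_eq τ c c' _ _ h hcc (by omega)
      rcases hs : sg c' with _ | _
      · have e4 := e3 (e1.trans hs)
        simp [sg] at hs
        omega
      · have e4 := e2 (e1.trans hs)
        simp [sg] at hs
        omega
    have hnone : ∀ c : Fin j, inflate τ ⟨0, hj⟩ false ≠ inflate τ c (sg c) := by
      intro c h
      by_cases hc : (c : ℕ) = 0
      · have : c = ⟨0, hj⟩ := Fin.ext hc
        subst this
        have := inflate_sign τ _ _ _ h
        simp [sg] at this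
      · obtain ⟨e1, e2, e3⟩ := inflate_eq τ ⟨0, hj⟩ c _ _ h (by simp [Fin.lt_def]; omega) (by omega)
        have e4 := e3 rfl
        have := e1.symm
        simp [sg] at this
        omega
    have hF : Function.Injective F := by
      intro o o' h
      rcases o with _ | c <;> rcases o' with _ | c'
      · rfl
      · exact absurd h (hnone c')
      · exact absurd h.symm (hnone c)
      · rcases lt_trichotomy c c' with h1 | h1 | h1
        · exact absurd h (hlt _ _ h1)
        · rw [h1]
        · exact absurd h.symm (hlt _ _ h1)
    have hsub : (Set.range F) ⊆ {ρ : Equiv.Perm (Fin (j + 1)) |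
        ∃ α β : Finset (Fin (j + 1)), α.card = j ∧ β.card = j ∧ (α ∩ β).card = j - 1 ∧
          OccursOn τ ρ α ∧ OccursOn τ ρ β} := by
      rintro _ ⟨o, rfl⟩
      rcases o with _ | c
      · exact inflate_mem τ _ _
      · exact inflate_mem τ _ _
    have hcard : (Set.range F).ncard = j + 1 := by
      rw [← Set.image_univ, Set.ncard_image_of_injective _ hF]
      simp [Set.ncard_univ]
    refine hcard.symm.le.trans ?_
    exact Set.ncard_le_ncard hsub (Set.toFinite _)
  exact gen _ (by omega)

theorem term_bound (n j i : ℕ) (hjn : j ≤ n) :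
    (n.choose (j + i) : ℝ) * (j.choose i : ℝ) / ((j + i).factorial : ℝ) ≤
      (n.choose j : ℝ) / (j.factorial : ℝ) * (((n - j : ℕ) : ℝ) / (j + 1)) ^ i / (i.factorial : ℝ) := by
  induction i with
  | zero => simp
  | succ i ih =>
    have h1 : (n.choose (j + i + 1) : ℝ) * (j + i + 1) = n.choose (j + i) * ((n - (j + i) : ℕ) : ℝ) := by
      exact_mod_cast Nat.choose_succ_right_eq n (j + i)
    have h2 : (j.choose (i + 1) : ℝ) * (i + 1) = j.choose i * ((j - i : ℕ) : ℝ) := by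
      exact_mod_cast Nat.choose_succ_right_eq j i
    have h3 : ((j + i + 1).factorial : ℝ) = (j + i + 1) * (j + i).factorial := by
      rw [Nat.factorial_succ]; push_cast; ring
    have h4 : ((i + 1).factorial : ℝ) = (i + 1) * i.factorial := by
      rw [Nat.factorial_succ]; push_cast; ring
    have k1 : ((n - (j + i) : ℕ) : ℝ) ≤ ((n - j : ℕ) : ℝ) := by
      exact_mod_cast (by omega : n - (j + i) ≤ n - j)
    have k2 : ((j - i : ℕ) : ℝ) ≤ j := by exact_mod_cast Nat.sub_le j i
    have p1 : (0 : ℝ) < (j + i).factorial := by exact_mod_cast Nat.factorial_pos _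
    have p2 : (0 : ℝ) < i.factorial := by exact_mod_cast Nat.factorial_pos _
    have e : (n.choose (j + (i + 1)) : ℝ) * (j.choose (i + 1) : ℝ) / ((j + (i + 1)).factorial : ℝ)
        = ((n.choose (j + i) : ℝ) * (j.choose i : ℝ) / ((j + i).factorial : ℝ)) *
          (((n - (j + i) : ℕ) : ℝ) * ((j - i : ℕ) : ℝ) / ((j + i + 1) ^ 2 * (i + 1))) := by
      rw [← add_assoc, h3, eq_div_of_mul_eq (by positivity) h1, eq_div_of_mul_eq (by positivity) h2]
      field_simp
    have f : ((n - (j + i) : ℕ) : ℝ) * ((j - i : ℕ) : ℝ) / ((j + i + 1) ^ 2 * (i + 1))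
        ≤ (((n - j : ℕ) : ℝ) / (j + 1)) / (i + 1) := by
      rw [div_div, div_le_div_iff₀ (by positivity) (by positivity)]
      have : ((j - i : ℕ) : ℝ) * (j + 1) ≤ (j + i + 1) ^ 2 := by
        have : ((j - i : ℕ) : ℝ) * (j + 1) ≤ j * (j + 1) := by gcongr
        have h0 : (0 : ℝ) ≤ j := by positivity
        have h00 : (0 : ℝ) ≤ i := by positivity
        nlinarith [mul_nonneg h0 h00]
      calc ((n - (j + i) : ℕ) : ℝ) * ((j - i : ℕ) : ℝ) * ((j + 1) * (i + 1))
          = ((n - (j + i) : ℕ) : ℝ) * (((j - i : ℕ) : ℝ) * (j + 1)) * (i + 1) := by ring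
        _ ≤ ((n - j : ℕ) : ℝ) * ((j + i + 1) ^ 2) * (i + 1) := by gcongr
        _ = _ := by ring
    rw [e]
    calc _ ≤ ((n.choose j : ℝ) / (j.factorial : ℝ) * (((n - j : ℕ) : ℝ) / (j + 1)) ^ i / (i.factorial : ℝ))
          * ((((n - j : ℕ) : ℝ) / (j + 1)) / (i + 1)) := by gcongr
      _ = _ := by rw [h4, pow_succ]; field_simp

/-- series term -/
def uterm (i : ℕ) : ℝ := ((2 * i).choose i : ℝ) ^ 2 / ((i.factorial : ℝ) * 8 ^ i)

theorem uterm_succ (i : ℕ) (hi : 7 ≤ i) : uterm (i + 1) ≤ uterm i / 4 := by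
  have h := Nat.succ_mul_centralBinom_succ i
  rw [Nat.centralBinom, Nat.centralBinom] at h
  have h' : ((i : ℝ) + 1) * ((2 * (i + 1)).choose (i + 1) : ℝ) = 2 * (2 * i + 1) * ((2 * i).choose i : ℝ) := by
    exact_mod_cast h
  have hle : ((2 * (i + 1)).choose (i + 1) : ℝ) ≤ 4 * ((2 * i).choose i : ℝ) := by
    have h0 : (0 : ℝ) ≤ ((2 * i).choose i : ℝ) := by positivity
    have hi0 : (0 : ℝ) < (i : ℝ) + 1 := by positivity
    by_contra hc
    push Not at hc
    nlinarith [mul_lt_mul_of_pos_left hc hi0]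
  unfold uterm
  rw [Nat.factorial_succ, div_div, div_le_div_iff₀ (by positivity) (by positivity)]
  have h8 : (8 : ℝ) ≤ (i : ℝ) + 1 := by
    have : (7 : ℝ) ≤ i := by exact_mod_cast hi
    linarith
  push_cast
  calc ((2 * (i + 1)).choose (i + 1) : ℝ) ^ 2 * ((i.factorial : ℝ) * 8 ^ i * 4)
      ≤ (4 * ((2 * i).choose i : ℝ)) ^ 2 * ((i.factorial : ℝ) * 8 ^ i * 4) := by gcongr
    _ = ((2 * i).choose i : ℝ) ^ 2 * (8 * (i.factorial : ℝ) * (8 ^ i * 8)) := by ring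
    _ ≤ ((2 * i).choose i : ℝ) ^ 2 * (((i : ℝ) + 1) * (i.factorial : ℝ) * (8 ^ i * 8)) := by gcongr
    _ = _ := by ring

theorem uterm_sum7 : ∑ i ∈ Finset.Icc 1 7, uterm i + uterm 7 / 3 ≤ 1 := by
  have c1 : (2 * 1).choose 1 = 2 := by decide
  have c2 : (2 * 2).choose 2 = 6 := by decide
  have c3 : (2 * 3).choose 3 = 20 := by decide
  have c4 : (2 * 4).choose 4 = 70 := by decide
  have c5 : (2 * 5).choose 5 = 252 := by simp [Nat.choose]
  have c6 : (2 * 6).choose 6 = 924 := by simp [Nat.choose]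
  have c7 : (2 * 7).choose 7 = 3432 := by simp [Nat.choose]
  have e : Finset.Icc 1 7 = {1, 2, 3, 4, 5, 6, 7} := by decide
  rw [e]
  simp only [uterm]
  simp only [Finset.sum_insert, Finset.mem_insert, Finset.mem_singleton, Finset.sum_singleton,
    c1, c2, c3, c4, c5, c6, c7, Nat.factorial]
  norm_num [c1, c2, c3, c4, c5, c6, c7]

theorem uterm_nonneg (i : ℕ) : 0 ≤ uterm i := by unfold uterm; positivity

theorem uterm_sum (K : ℕ) : ∑ i ∈ Finset.Icc 1 K, uterm i ≤ 1 := by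
  have big : ∀ K, 7 ≤ K → ∑ i ∈ Finset.Icc 1 K, uterm i + uterm K / 3 ≤ 1 := by
    intro K hK
    induction K, hK using Nat.le_induction with
    | base => exact uterm_sum7
    | succ K hK ih =>
      rw [Finset.sum_Icc_succ_top (by omega)]
      have := uterm_succ K hK
      linarith
  have h1 : ∑ i ∈ Finset.Icc 1 K, uterm i ≤ ∑ i ∈ Finset.Icc 1 (K + 7), uterm i := by
    apply Finset.sum_le_sum_of_subset_of_nonneg
    · exact Finset.Icc_subset_Icc_right (by omega)
    · intro i _ _; exact uterm_nonneg i
  have := big (K + 7) (by omega)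
  have := uterm_nonneg (K + 7)
  linarith

theorem series_bound (K : ℕ) (y : ℝ) (hy : 0 ≤ y) (hy8 : y ≤ 1 / 8) :
    ∑ i ∈ Finset.Icc 1 K, y ^ i / (i.factorial : ℝ) * ((2 * i).choose i : ℝ) ^ 2 ≤ 8 * y := by
  have : ∀ i ∈ Finset.Icc 1 K, y ^ i / (i.factorial : ℝ) * ((2 * i).choose i : ℝ) ^ 2 ≤
      8 * y * uterm i := by
    intro i hi
    obtain ⟨l, rfl⟩ : ∃ l, i = l + 1 := ⟨i - 1, by simp at hi; omega⟩
    have hyl : y ^ (l + 1) ≤ 8 * y * (1 / 8) ^ (l + 1) := by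
      have : y ^ l ≤ (1 / 8) ^ l := by gcongr
      rw [pow_succ, pow_succ]
      nlinarith
    unfold uterm
    calc y ^ (l + 1) / ((l + 1).factorial : ℝ) * ((2 * (l + 1)).choose (l + 1) : ℝ) ^ 2
        ≤ (8 * y * (1 / 8) ^ (l + 1)) / ((l + 1).factorial : ℝ) * ((2 * (l + 1)).choose (l + 1) : ℝ) ^ 2 := by
          gcongr
      _ = _ := by rw [one_div, inv_pow]; field_simp
  calc _ ≤ ∑ i ∈ Finset.Icc 1 K, 8 * y * uterm i := Finset.sum_le_sum this
    _ = 8 * y * ∑ i ∈ Finset.Icc 1 K, uterm i := by rw [Finset.mul_sum]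
    _ ≤ 8 * y * 1 := by have := uterm_sum K; gcongr
    _ = 8 * y := by ring

theorem tv_abs {ι : Type*} [Fintype ι] (P Q : ι → ℝ) (hP0 : ∀ x, 0 ≤ P x) (hQ0 : ∀ x, 0 ≤ Q x)
    (hP : ∑ x, P x = 1) (hQ : ∑ x, Q x = 1) (S : Finset ι) :
    (1 / 2) * ∑ x, |P x - Q x| ≤ 1 - ∑ x ∈ S, min (P x) (Q x) := by
  have h1 : ∀ x, |P x - Q x| = P x + Q x - 2 * min (P x) (Q x) := by
    intro x
    rcases le_total (P x) (Q x) with h | h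
    · rw [min_eq_left h, abs_of_nonpos (by linarith)]; ring
    · rw [min_eq_right h, abs_of_nonneg (by linarith)]; ring
  have h2 : ∑ x ∈ S, min (P x) (Q x) ≤ ∑ x, min (P x) (Q x) :=
    Finset.sum_le_sum_of_subset_of_nonneg (Finset.subset_univ _)
      (fun x _ _ => le_min (hP0 x) (hQ0 x))
  simp only [h1, Finset.sum_sub_distrib, Finset.sum_add_distrib, ← Finset.mul_sum, hP, hQ]
  linarith

theorem unifProb_nonneg {n : ℕ} (E : Set (Equiv.Perm (Fin n))) : 0 ≤ unifProb E := by
  unfold unifProb; positivity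

theorem unifProb_mono {n : ℕ} {E F : Set (Equiv.Perm (Fin n))} (h : E ⊆ F) :
    unifProb E ≤ unifProb F := by
  unfold unifProb
  have : E.ncard ≤ F.ncard := Set.ncard_le_ncard h (Set.toFinite _)
  gcongr

theorem unifProb_univ {n : ℕ} : unifProb (Set.univ : Set (Equiv.Perm (Fin n))) = 1 := by
  unfold unifProb
  rw [Set.ncard_univ, Nat.card_eq_fintype_card, Fintype.card_perm, Fintype.card_fin]
  exact div_self (by exact_mod_cast n.factorial_ne_zero)

theorem unifProb_union {n : ℕ} (E F : Set (Equiv.Perm (Fin n))) :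
    unifProb (E ∪ F) ≤ unifProb E + unifProb F := by
  unfold unifProb
  rw [← add_div]
  have : (E ∪ F).ncard ≤ E.ncard + F.ncard := Set.ncard_union_le _ _
  have : ((E ∪ F).ncard : ℝ) ≤ E.ncard + F.ncard := by exact_mod_cast this
  gcongr

theorem unifProb_biUnion {n : ℕ} {I : Type*} (S : Finset I) (E : I → Set (Equiv.Perm (Fin n))) :
    unifProb (⋃ i ∈ S, E i) ≤ ∑ i ∈ S, unifProb (E i) := by
  induction S using Finset.induction_on with
  | empty => simp [unifProb]
  | insert a S ha ih =>
    rw [Finset.sum_insert ha, Finset.set_biUnion_insert]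
    exact (unifProb_union _ _).trans (by linarith)

theorem sumP {n : ℕ} {I : Type*} [Fintype I] [DecidableEq I]
    (X : Equiv.Perm (Fin n) → I → Prop) :
    ∑ x : I → Bool, unifProb {σ | ∀ α, X σ α ↔ x α = true} = 1 := by
  rw [← unifProb_univ (n := n)]
  unfold unifProb
  rw [← Finset.sum_div]
  congr 1
  have h := Finset.card_eq_sum_card_fiberwise (s := (Finset.univ : Finset (Equiv.Perm (Fin n))))
    (t := (Finset.univ : Finset (I → Bool))) (f := fun σ α => decide (X σ α)) (by simp [Set.MapsTo])
  rw [Set.ncard_univ, Nat.card_eq_fintype_card, ← Finset.card_univ, h]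
  push_cast
  refine Finset.sum_congr rfl fun x _ => ?_
  rw [Set.ncard_eq_toFinset_card']
  congr 2
  ext σ
  simp only [Set.mem_toFinset, Set.mem_setOf_eq, Finset.mem_filter, Finset.mem_univ, true_and,
    funext_iff]
  refine forall_congr' fun α => ?_
  by_cases h : X σ α <;> cases x α <;> simp [h]

theorem sumQ {I : Type*} [Fintype I] [DecidableEq I] (p : I → ℝ) :
    ∑ x : I → Bool, ∏ α, (if x α then p α else 1 - p α) = 1 := by
  have h := Finset.prod_univ_sum (fun _ : I => (Finset.univ : Finset Bool))
    (fun α b => if b then p α else 1 - p α)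
  rw [Fintype.piFinset_univ] at h
  rw [← h]
  simp

/-- indicator of a single point -/
def pt {I : Type*} [DecidableEq I] (α : I) : I → Bool := fun β => decide (β = α)

section
variable {n : ℕ} {I : Type*} [Fintype I] [DecidableEq I]
  (X : Equiv.Perm (Fin n) → I → Prop) (p : I → ℝ) (q : ℝ)

theorem dtv_S (hq : ∀ α, p α = q) (hq0 : 0 ≤ q) (hq1 : q ≤ 1) (S : Finset (I → Bool)) :
    dTVFamUnif X p ≤ 1 - ∑ x ∈ S, min (unifProb {σ | ∀ α, X σ α ↔ x α = true})
      (∏ α, (if x α then p α else 1 - p α)) := by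
  unfold dTVFamUnif
  refine tv_abs _ _ (fun _ => unifProb_nonneg _) ?_ (sumP X) (sumQ p) S
  intro x
  refine Finset.prod_nonneg fun α _ => ?_
  rw [hq]
  split_ifs <;> linarith

theorem tvmin_zero (hX : ∀ α, unifProb {σ | X σ α} = q) (hq : ∀ α, p α = q) (hq0 : 0 ≤ q) (hq1 : q ≤ 1) :
    1 - (Fintype.card I : ℝ) * q ≤ min (unifProb {σ | ∀ α, X σ α ↔ (fun _ => false : I → Bool) α = true})
      (∏ α, (if (fun _ => false : I → Bool) α then p α else 1 - p α)) := by
  apply le_min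
  · have h1 := unifProb_biUnion Finset.univ (fun α => {σ | X σ α})
    simp only [hX, Finset.sum_const, nsmul_eq_mul, Finset.card_univ] at h1
    have h2 := unifProb_union {σ | ∀ α, X σ α ↔ (fun _ => false : I → Bool) α = true}
      (⋃ α ∈ (Finset.univ : Finset I), {σ | X σ α})
    have h3 := unifProb_univ (n := n)
    have h4 := unifProb_mono (n := n) (E := Set.univ)
      (F := {σ | ∀ α, X σ α ↔ (fun _ => false : I → Bool) α = true} ∪
        ⋃ α ∈ (Finset.univ : Finset I), {σ | X σ α}) (by
      intro σ _
      by_cases h : ∃ α, X σ α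
      · right; simpa using h
      · left; push Not at h; simpa using h)
    linarith
  · simp only [Bool.false_eq_true, if_false, hq, Finset.prod_const, Finset.card_univ]
    have := one_add_mul_le_pow (a := -q) (by linarith) (Fintype.card I)
    rw [← sub_eq_add_neg] at this
    linarith

theorem min_pt (hX : ∀ α, unifProb {σ | X σ α} = q) (hq : ∀ α, p α = q) (hq0 : 0 ≤ q) (hq1 : q ≤ 1)
    (α : I) :
    q - unifProb {σ | X σ α ∧ ∃ β, β ≠ α ∧ X σ β} - q * ((Fintype.card I : ℝ) * q) ≤
      min (unifProb {σ | ∀ β, X σ β ↔ pt α β = true})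
      (∏ β, (if pt α β then p β else 1 - p β)) := by
  have h0 := unifProb_nonneg {σ | X σ α ∧ ∃ β, β ≠ α ∧ X σ β}
  have h00 : 0 ≤ q * ((Fintype.card I : ℝ) * q) := by positivity
  apply le_min
  · have h2 := unifProb_union {σ | ∀ β, X σ β ↔ pt α β = true} {σ | X σ α ∧ ∃ β, β ≠ α ∧ X σ β}
    have h4 := unifProb_mono (n := n) (E := {σ | X σ α})
      (F := {σ | ∀ β, X σ β ↔ pt α β = true} ∪ {σ | X σ α ∧ ∃ β, β ≠ α ∧ X σ β}) (by
      intro σ hσ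
      by_cases h : ∃ β, β ≠ α ∧ X σ β
      · right; exact ⟨hσ, h⟩
      · left; push Not at h
        intro β
        simp only [pt, decide_eq_true_eq]
        constructor
        · intro hb; by_contra hc; exact h β hc hb
        · rintro rfl; exact hσ)
    rw [hX] at h4
    linarith
  · simp only [pt, decide_eq_true_eq, hq]
    rw [← Finset.mul_prod_erase _ _ (Finset.mem_univ α), if_pos rfl]
    have e : ∏ x ∈ Finset.univ.erase α, (if x = α then q else 1 - q)
        = (1 - q) ^ (Fintype.card I - 1) := by
      rw [Finset.prod_congr rfl (g := fun _ => 1 - q)]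
      · simp [Finset.card_erase_of_mem]
      · intro x hx; rw [if_neg (Finset.ne_of_mem_erase hx)]
    rw [e]
    have h5 := one_add_mul_le_pow (a := -q) (by linarith) (Fintype.card I - 1)
    rw [← sub_eq_add_neg] at h5
    have h6 : ((Fintype.card I - 1 : ℕ) : ℝ) ≤ Fintype.card I := by
      exact_mod_cast Nat.sub_le _ _
    have h7 : ((Fintype.card I - 1 : ℕ) : ℝ) * q ≤ Fintype.card I * q := by gcongr
    have h8 : q * (1 - Fintype.card I * q) ≤ q * (1 - q) ^ (Fintype.card I - 1) := by
      apply mul_le_mul_of_nonneg_left _ hq0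
      linarith
    linarith

theorem dtv_one (hq : ∀ α, p α = q) (hq0 : 0 ≤ q) (hq1 : q ≤ 1) : dTVFamUnif X p ≤ 1 := by
  have := dtv_S X p q hq hq0 hq1 ∅
  simpa using this

theorem dtv_lam (hX : ∀ α, unifProb {σ | X σ α} = q) (hq : ∀ α, p α = q) (hq0 : 0 ≤ q)
    (hq1 : q ≤ 1) : dTVFamUnif X p ≤ (Fintype.card I : ℝ) * q := by
  have := dtv_S X p q hq hq0 hq1 {fun _ => false}
  rw [Finset.sum_singleton] at this
  have h := tvmin_zero X p q hX hq hq0 hq1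
  linarith

theorem pt_inj : Function.Injective (pt : I → I → Bool) := by
  intro a b h
  have := congrFun h a
  simpa [pt] using this

theorem dtv_two (hX : ∀ α, unifProb {σ | X σ α} = q) (hq : ∀ α, p α = q) (hq0 : 0 ≤ q)
    (hq1 : q ≤ 1) : dTVFamUnif X p ≤ ((Fintype.card I : ℝ) * q) ^ 2 +
      ∑ α, unifProb {σ | X σ α ∧ ∃ β, β ≠ α ∧ X σ β} := by
  have h1 := dtv_S X p q hq hq0 hq1 (insert (fun _ => false) (Finset.univ.image pt))
  rw [Finset.sum_insert (by
    simp only [Finset.mem_image, Finset.mem_univ, true_and, not_exists]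
    intro a h
    have := congrFun h a
    simp [pt] at this), Finset.sum_image (fun a _ b _ h => pt_inj h)] at h1
  have h2 := tvmin_zero X p q hX hq hq0 hq1
  have h3 := Finset.sum_le_sum (s := Finset.univ) (fun α _ => min_pt X p q hX hq hq0 hq1 α)
  simp only [Finset.sum_sub_distrib, Finset.sum_const, nsmul_eq_mul, Finset.card_univ] at h3
  nlinarith [h1, h2, h3]

end

theorem sum_g {n j : ℕ} (τ : Equiv.Perm (Fin j)) :
    ∑ α : {α : Finset (Fin n) // α.card = j},
      Set.ncard {σ : Equiv.Perm (Fin n) | OccursOn τ σ α.1 ∧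
        ∃ β : {α : Finset (Fin n) // α.card = j}, β ≠ α ∧ OccursOn τ σ β.1} ≤
    (Finset.univ.filter (fun q : Equiv.Perm (Fin n) × Finset (Fin n) =>
      OccursOn τ q.1 q.2 ∧ ∃ β, β ≠ q.2 ∧ OccursOn τ q.1 β)).card := by
  simp only [Set.ncard_eq_toFinset_card']
  rw [← Finset.card_sigma]
  refine Finset.card_le_card_of_injOn (fun s => (s.2, s.1.1)) ?_ ?_
  · rintro ⟨α, σ⟩ h
    simp only [Finset.coe_sigma, Set.mem_sigma_iff, Finset.mem_coe, Set.mem_toFinset, Set.mem_setOf_eq] at h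
    obtain ⟨-, h1, β, h2, h3⟩ := h
    simp only [Finset.coe_filter, Finset.mem_univ, true_and, Set.mem_setOf_eq]
    exact ⟨h1, β.1, fun h => h2 (Subtype.ext h), h3⟩
  · rintro ⟨⟨α, ha⟩, σ⟩ _ ⟨⟨β, hb⟩, ρ⟩ _ h
    simp only [Prod.mk.injEq] at h
    obtain ⟨rfl, rfl⟩ := h
    rfl

theorem sum_g_bound {n j : ℕ} (hjn : j ≤ n) (τ : Equiv.Perm (Fin j))
    (h8 : 8 * (n - j) ≤ j + 1) :
    ∑ α : {α : Finset (Fin n) // α.card = j},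
      unifProb {σ : Equiv.Perm (Fin n) | OccursOn τ σ α.1 ∧
        ∃ β : {α : Finset (Fin n) // α.card = j}, β ≠ α ∧ OccursOn τ σ β.1} ≤
    (n.choose j : ℝ) / (j.factorial : ℝ) * (8 * (((n - j : ℕ) : ℝ) / (j + 1))) := by
  unfold unifProb
  rw [← Finset.sum_div]
  have h1 := (sum_g (n := n) τ).trans (count_pairs τ)
  have h2 : (((∑ α : {α : Finset (Fin n) // α.card = j},
      Set.ncard {σ : Equiv.Perm (Fin n) | OccursOn τ σ α.1 ∧
        ∃ β : {α : Finset (Fin n) // α.card = j}, β ≠ α ∧ OccursOn τ σ β.1}) : ℕ) : ℝ) ≤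
     ((∑ i ∈ Finset.Icc 1 (n - j), n.choose (j + i) * (j.choose i * ((2 * i).choose i) ^ 2 * n.descFactorial (n - (j + i))) : ℕ) : ℝ) := by exact_mod_cast h1
  push_cast at h2
  refine (div_le_div_of_nonneg_right h2 (by positivity)).trans ?_
  rw [Finset.sum_div]
  have hy8 : ((n - j : ℕ) : ℝ) / (j + 1) ≤ 1 / 8 := by
    have : (8 * (n - j : ℕ) : ℝ) ≤ j + 1 := by exact_mod_cast h8
    rw [div_le_iff₀ (by positivity)]
    linarith
  refine le_trans ?_ (mul_le_mul_of_nonneg_left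
    (series_bound (n - j) (((n - j : ℕ) : ℝ) / (j + 1)) (by positivity) hy8) (by positivity))
  rw [Finset.mul_sum]
  refine Finset.sum_le_sum fun i hi => ?_
  rw [Finset.mem_Icc] at hi
  have hm : j + i ≤ n := by omega
  have t := term_bound n j i hjn
  have hd : (n.descFactorial (n - (j + i)) : ℝ) / n.factorial = 1 / (j + i).factorial := by
    have := Nat.factorial_mul_descFactorial (n := n) (k := n - (j + i)) (by omega)
    rw [show n - (n - (j + i)) = j + i by omega] at this
    have hh : ((j + i).factorial : ℝ) * n.descFactorial (n - (j + i)) = n.factorial := by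
      exact_mod_cast this
    rw [div_eq_div_iff (by positivity) (by positivity), ← hh]; ring
  calc (n.choose (j + i) : ℝ) * (j.choose i * ((2 * i).choose i : ℝ) ^ 2 * n.descFactorial (n - (j + i))) / n.factorial
      = (n.choose (j + i) : ℝ) * (j.choose i * ((2 * i).choose i : ℝ) ^ 2) *
        ((n.descFactorial (n - (j + i)) : ℝ) / n.factorial) := by ring
    _ = ((n.choose (j + i) : ℝ) * j.choose i / (j + i).factorial) * ((2 * i).choose i : ℝ) ^ 2 := by
        rw [hd]; ring
    _ ≤ _ := by
        refine (mul_le_mul_of_nonneg_right t (by positivity)).trans (le_of_eq ?_)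
        ring

theorem d2_lower (n j : ℕ) (hj : 3 ≤ j) (hjn : j ≤ n) (τ : Equiv.Perm (Fin j)) :
    2 * ((n.choose j : ℝ) / (j.factorial : ℝ) * (((n - j : ℕ) : ℝ) / (j + 1))) ≤
      ∑ s ∈ Finset.Icc 1 (j - 1),
        (n.choose (2 * j - s) : ℝ) * 2 * (overlapCount τ s : ℝ) / ((2 * j - s).factorial : ℝ) := by
  have h := Finset.single_le_sum (s := Finset.Icc 1 (j - 1)) (a := j - 1) (f := fun s =>
    (n.choose (2 * j - s) : ℝ) * 2 * (overlapCount τ s : ℝ) / ((2 * j - s).factorial : ℝ))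
    (fun s _ => by positivity) (by simp; omega)
  refine le_trans ?_ h
  have hL := overlap_lower (j := j) (by omega) τ
  have hL' : ((j : ℝ) + 1) ≤ overlapCount τ (j - 1) := by exact_mod_cast hL
  have hc : (n.choose (j + 1) : ℝ) * (j + 1) = n.choose j * ((n - j : ℕ) : ℝ) := by
    exact_mod_cast Nat.choose_succ_right_eq n j
  have hf : (((j + 1).factorial : ℕ) : ℝ) = (j + 1) * j.factorial := by
    rw [Nat.factorial_succ]; push_cast; ring
  generalize hg : (overlapCount τ (j - 1) : ℝ) = L at *
  rw [show 2 * j - (j - 1) = j + 1 by omega, hf]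
  have e : 2 * ((n.choose j : ℝ) / (j.factorial : ℝ) * (((n - j : ℕ) : ℝ) / (j + 1))) =
     (n.choose (j + 1) : ℝ) * 2 * (j + 1) / ((j + 1) * j.factorial) := by
    have hpos : (0 : ℝ) < j.factorial := by positivity
    field_simp
    linarith
  rw [e]
  gcongr
/-- Theorem: total variation bound between the joint law of the pattern-occurrence
indicators `(X_α)_{α ∈ Γ_j}` of a uniformly random permutation of `[n]` and a family of
independent Bernoulli random variables with the same marginals. -/
theorem stmt1 (n j : ℕ) (hj : 3 ≤ j) (hjn : j ≤ n) (τ : Equiv.Perm (Fin j))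
    (lam d1 d2 D : ℝ)
    (hlam : lam = (n.choose j : ℝ) / (j.factorial : ℝ))
    (hd1 : d1 = (n.choose j : ℝ) * ((n.choose j : ℝ) - ((n - j).choose j : ℝ))
        / (j.factorial : ℝ) ^ 2)
    (hd2 : d2 = ∑ s ∈ Finset.Icc 1 (j - 1),
        (n.choose (2 * j - s) : ℝ) * 2 * (overlapCount τ s : ℝ) / ((2 * j - s).factorial : ℝ))
    (hD : D = min 1 lam⁻¹ * (d1 + d2))
    (p : {α : Finset (Fin n) // α.card = j} → ℝ)
    (hp : ∀ α, p α = unifProb {σ | OccursOn τ σ α.1})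
    (hmarg : ∀ α, p α = 1 / (j.factorial : ℝ)) :
    dTVFamUnif (fun σ α => OccursOn τ σ α.1) p ≤ 4 * D + 2 * lam / (j.factorial : ℝ) := by
  have hfp : (0 : ℝ) < j.factorial := by positivity
  have hf1 : (1 : ℝ) ≤ j.factorial := by exact_mod_cast j.factorial_pos
  have hq0 : (0 : ℝ) ≤ 1 / (j.factorial : ℝ) := by positivity
  have hq1 : 1 / (j.factorial : ℝ) ≤ 1 := by rw [div_le_one hfp]; exact hf1
  have hX : ∀ α : {α : Finset (Fin n) // α.card = j},
      unifProb {σ | OccursOn τ σ α.1} = 1 / (j.factorial : ℝ) := by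
    intro α; rw [← hp, hmarg]
  have hcard : Fintype.card {α : Finset (Fin n) // α.card = j} = n.choose j := by
    rw [Fintype.card_finset_len, Fintype.card_fin]
  have hN : (Fintype.card {α : Finset (Fin n) // α.card = j} : ℝ) * (1 / (j.factorial : ℝ)) = lam := by
    rw [hcard, hlam]; ring
  have b1 := dtv_one (fun (σ : Equiv.Perm (Fin n)) (α : {α : Finset (Fin n) // α.card = j}) =>
    OccursOn τ σ α.1) p _ hmarg hq0 hq1
  have b2 := dtv_lam (fun (σ : Equiv.Perm (Fin n)) (α : {α : Finset (Fin n) // α.card = j}) =>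
    OccursOn τ σ α.1) p _ hX hmarg hq0 hq1
  have b3 := dtv_two (fun (σ : Equiv.Perm (Fin n)) (α : {α : Finset (Fin n) // α.card = j}) =>
    OccursOn τ σ α.1) p _ hX hmarg hq0 hq1
  rw [hN] at b2 b3
  have hlp : 0 < lam := by
    rw [hlam]
    have : (0 : ℝ) < n.choose j := by exact_mod_cast Nat.choose_pos hjn
    positivity
  have hd1' : 0 ≤ d1 := by
    rw [hd1]
    have : ((n - j).choose j : ℝ) ≤ n.choose j := by
      exact_mod_cast Nat.choose_le_choose j (Nat.sub_le n j)
    have : 0 ≤ (n.choose j : ℝ) - ((n - j).choose j : ℝ) := by linarith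
    positivity
  have hd2' := d2_lower n j hj hjn τ
  rw [← hd2, ← hlam] at hd2'
  have hlf : 0 ≤ 2 * lam / (j.factorial : ℝ) := by positivity
  have hy0 : 0 ≤ ((n - j : ℕ) : ℝ) / (j + 1) := by positivity
  have hly := mul_nonneg hlp.le hy0
  have hm : min 1 lam⁻¹ * lam = min lam 1 := by
    rw [min_mul_of_nonneg _ _ hlp.le, one_mul, inv_mul_cancel₀ hlp.ne']
  have hm0 : 0 ≤ min 1 lam⁻¹ := le_min zero_le_one (inv_nonneg.2 hlp.le)
  have red : lam ≤ 4 * (d1 + d2) →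
      dTVFamUnif (fun σ (α : {α : Finset (Fin n) // α.card = j}) => OccursOn τ σ α.1) p
        ≤ 4 * D + 2 * lam / (j.factorial : ℝ) := by
    intro h
    have h1 := mul_le_mul_of_nonneg_left h hm0
    rw [hm] at h1
    have h2 := le_min b2 b1
    rw [hD]
    linarith
  by_cases hk : j + 1 ≤ 8 * (n - j)
  · apply red
    have : (1 / 8 : ℝ) ≤ ((n - j : ℕ) : ℝ) / (j + 1) := by
      have : ((j : ℝ) + 1) ≤ 8 * (n - j : ℕ) := by exact_mod_cast hk
      rw [le_div_iff₀ (by positivity)]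
      linarith
    have := mul_le_mul_of_nonneg_left this hlp.le
    linarith
  · have hd1e : d1 = lam ^ 2 := by
      rw [hd1, hlam, Nat.choose_eq_zero_of_lt (show n - j < j by omega)]
      simp only [Nat.cast_zero, sub_zero]
      ring
    by_cases hl : 1 ≤ lam
    · apply red
      nlinarith
    · push Not at hl
      have g := sum_g_bound hjn τ (by omega)
      rw [← hlam] at g
      have hm1 : min 1 lam⁻¹ = 1 := min_eq_left ((one_le_inv₀ hlp).2 hl.le)
      rw [hD, hm1, one_mul, hd1e]
      have := sq_nonneg lam
      linarith

end
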